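/- Let L be a finite lattice, let φ ∈ M_1(L), and let (a_1,…,a_n) be a monotone path in L (distinct elements with a_i < a_j implying i < j). Set φ_0 = φ and φ_i = Λ_{a_i} φ_{i−1} for i = 1,…,n. Choose any Ψ_0,…,Ψ_n ∈ M_∞(𝓛) with Π(Ψ_i) = λ(φ_i; a_{i+1}, ·) for i = 0,…,n−1 and Π(Ψ_n) = φ_n, and let Φ = Σ_{i=0}^n Ψ_i with Möbius inverse f on 𝓛. Then Π(Φ) = φ, and for every k ∈ {1,…,n} and every x ∈ L, Λ_{a_1,…,a_k} φ(x) = Σ{f(V) : V ∈ 𝓛, x ∈ V and a_i ∉ V for all i = 1,…,k}. -/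

import Mathlib

/-!
Every `Ψ i` has a nonnegative Möbius inverse `F i` (`IsMobiusInvL.nonneg_of_minf`), because the
value of the inverse at an up-set `U` is the successive difference of `Ψ i` at `U` along all
principal up-sets not contained in `U` (`IsMobiusInvL.apply_eq_succDiffU`); this formula also
gives uniqueness, so `f = ∑ F i` on `𝓛`.  Indices of the `a_i` start at `0`.

Telescoping `φ_i = λ(φ_i; a_i, ·) + φ_{i+1}` gives
`φ_k(x) = ∑_{i ≥ k} Ψ_i(⟨x⟩*) = ∑_{i ≥ k} ∑_{V ∋ x} F_i(V)`; in particular `Π(Φ) = φ`, and each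
`φ_k` is nonnegative and monotone.

For nonnegative monotone `φ` any tree containing `a` has value at most `φ(a)`
(`phiTree_le`), whence `λ(φ; a, a) = λ(φ; a, 1̂) = φ(a)`.  Two vanishing facts follow.

* For `i < n`, the mass of `F_i` on the up-sets containing `a_i` is `λ(φ_i; a_i, a_i)`, and its
  total mass is `λ(φ_i; a_i, 1̂)`.  They agree, so `F_i` is supported on up-sets containing `a_i`.
* `φ_{j+1}(a_j) = 0`, and `φ_{j+1}(a_j)` is the sum of all `F_i(V)` with `i > j` and `a_j ∈ V`,
  so `F_i` vanishes on up-sets containing some `a_j` with `j < i`.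

Hence summing `f = ∑ F_i` over the up-sets that contain `x` and avoid the first `k` of the `a_i`
kills exactly the terms with `i < k` and leaves `φ_k(x)`.
-/

attribute [local instance 50] Classical.propDecidable

/-- `U` is a member of `𝓛`: a nonempty dual order ideal (up-set) of `L`. -/
def MemL {L : Type*} [Lattice L] (U : Finset L) : Prop :=
  (∀ ⦃x y : L⦄, x ∈ U → x ≤ y → y ∈ U) ∧ U.Nonempty

/-- The family `𝓛` of nonempty up-sets of `L`, as a finset of finsets. -/
noncomputable def LFam (L : Type*) [Lattice L] [Fintype L] : Finset (Finset L) :=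
  Finset.univ.filter (fun U => MemL U)

/-- The successive difference operator on `𝓛` (ordered by reverse inclusion, so that
the meet of two up-sets is their union): `∇_U Φ(W) = Φ(W) − Φ(W ⊓ U) = Φ(W) − Φ(W ∪ U)`,
iterated over a list. -/
def succDiffU {L : Type*} [Lattice L] [DecidableEq L]
    (Φ : Finset L → ℝ) (l : List (Finset L)) : Finset L → ℝ :=
  l.foldl (fun Ψ U => fun W => Ψ W - Ψ (W ∪ U)) Φ

/-- `Φ ∈ M_∞(𝓛)`: `Φ` is nonnegative and completely monotone on `𝓛`
(the empty list gives nonnegativity of `Φ` itself). -/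
def Minf {L : Type*} [Lattice L] [DecidableEq L] (Φ : Finset L → ℝ) : Prop :=
  ∀ l : List (Finset L), (∀ U ∈ l, MemL U) → ∀ W : Finset L, MemL W →
    0 ≤ succDiffU Φ l W

/-- The principal up-set `⟨x⟩* = {y ∈ L : y ≥ x}`. -/
noncomputable def pUp {L : Type*} [Lattice L] [Fintype L] (x : L) : Finset L :=
  Finset.univ.filter (fun y => x ≤ y)

/-- The up-set `⟨A⟩*` generated by `A ⊆ L`. -/
noncomputable def upGen {L : Type*} [Lattice L] [Fintype L] (A : Finset L) : Finset L :=
  Finset.univ.filter (fun y => ∃ a ∈ A, a ≤ y)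

/-- `φ ∈ M_1(L)`: `φ` is nonnegative and monotone. -/
def M1 {L : Type*} [Lattice L] (φ : L → ℝ) : Prop :=
  (∀ x, 0 ≤ φ x) ∧ Monotone φ

/-- `f` is the Möbius inverse of `Φ` on `𝓛`: `Φ(U) = Σ_{V ⪯ U} f(V)`,
where `V ⪯ U` means `U ⊆ V`. -/
def IsMobiusInvL {L : Type*} [Lattice L] [Fintype L] (Φ f : Finset L → ℝ) : Prop :=
  ∀ U : Finset L, MemL U → Φ U = ∑ V ∈ (LFam L).filter (fun V => U ⊆ V), f V

/-- A tree in `𝒯`: a connected acyclic simple graph whose (nonempty) vertex set is a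
subset of `L`, given by its vertex finset and edge finset. -/
structure FinTree (L : Type*) [Lattice L] where
  verts : Finset L
  edges : Finset (Sym2 L)
  nonempty : verts.Nonempty
  loopless : ∀ e ∈ edges, ¬ e.IsDiag
  edge_mem : ∀ e ∈ edges, ∀ x ∈ e, x ∈ verts
  connected : ∀ x ∈ verts, ∀ y ∈ verts,
    (SimpleGraph.fromEdgeSet (edges : Set (Sym2 L))).Reachable x y
  acyclic : (SimpleGraph.fromEdgeSet (edges : Set (Sym2 L))).IsAcyclic

/-- `φ(G) = Σ_{a ∈ G} φ(a) − Σ_{{a,b} ∈ E(G)} φ(a ∨ b)` for a tree `G ∈ 𝒯`. -/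
noncomputable def phiTree {L : Type*} [Lattice L] (φ : L → ℝ) (G : FinTree L) : ℝ :=
  (∑ a ∈ G.verts, φ a) -
    ∑ e ∈ G.edges, Sym2.lift ⟨fun a b => φ (a ⊔ b), fun a b => by simp [sup_comm]⟩ e

/-- `H` is a path from `a` to `b`: a tree in `𝒯` whose only leaves are `a` and `b`
(the one-vertex tree `{a}` being a path from `a` to `a`). -/
def IsPathTree {L : Type*} [Lattice L] (H : FinTree L) (a b : L) : Prop :=
  a ∈ H.verts ∧ b ∈ H.verts ∧
    ∀ x ∈ H.verts, (H.edges.filter (fun e => x ∈ e)).card ≤ 1 → x = a ∨ x = b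

/-- `λ(φ; a, b)`: the maximum of `φ(H)` over paths `H` from `a` to `b`. -/
noncomputable def lam {L : Type*} [Lattice L] (φ : L → ℝ) (a b : L) : ℝ :=
  sSup {r : ℝ | ∃ H : FinTree L, IsPathTree H a b ∧ phiTree φ H = r}

/-- The successive λ-difference operator `Λ_{a_1,…,a_n} φ`, with
`Λ_a φ(x) = φ(x) − λ(φ; a, x)` and `Λ_{a_1,…,a_n} φ = Λ_{a_n}(Λ_{a_1,…,a_{n−1}} φ)`. -/
noncomputable def lamSucc {L : Type*} [Lattice L] (φ : L → ℝ) (l : List L) : L → ℝ :=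
  l.foldl (fun ψ a => fun x => ψ x - lam ψ a x) φ

/-! ### Möbius inversion on the up-sets -/

section MobiusInverse

variable {L : Type*} [Lattice L] [Fintype L]

theorem mem_LFam {U : Finset L} : U ∈ LFam L ↔ MemL U := by
  simp [LFam]

theorem memL_pUp (x : L) : MemL (pUp x) := by
  refine ⟨fun y z hy hyz => ?_, ⟨x, by simp [pUp]⟩⟩
  simp only [pUp, Finset.mem_filter, Finset.mem_univ, true_and] at hy ⊢
  exact hy.trans hyz

theorem pUp_subset_iff {U : Finset L} (hU : MemL U) (x : L) : pUp x ⊆ U ↔ x ∈ U := by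
  constructor
  · intro h
    exact h (by simp [pUp])
  · intro h y hy
    simp only [pUp, Finset.mem_filter, Finset.mem_univ, true_and] at hy
    exact hU.1 h hy

/-- The Möbius inverse on `𝓛`, by recursion on the size of the complement:
`f(U) = Ψ(U) − Σ_{V ⊋ U} f(V)`. -/
noncomputable def mobiusInv (Ψ : Finset L → ℝ) (U : Finset L) : ℝ :=
  Ψ U - ∑ V ∈ ((LFam L).filter (fun V => U ⊂ V)).attach, mobiusInv Ψ V.1
termination_by Fintype.card L - U.card
decreasing_by
  have h := (Finset.mem_filter.1 V.2).2
  have h1 := Finset.card_lt_card h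
  have h2 := Finset.card_le_univ V.1
  omega

theorem isMobiusInvL_mobiusInv (Ψ : Finset L → ℝ) : IsMobiusInvL Ψ (mobiusInv Ψ) := by
  intro U hU
  have hsplit : (LFam L).filter (fun V => U ⊆ V) =
      insert U ((LFam L).filter (fun V => U ⊂ V)) := by
    ext V
    simp only [Finset.mem_filter, Finset.mem_insert]
    constructor
    · rintro ⟨h1, h2⟩
      rcases h2.eq_or_ssubset with h | h
      · exact Or.inl h.symm
      · exact Or.inr ⟨h1, h⟩
    · rintro (rfl | ⟨h1, h2⟩)
      · exact ⟨mem_LFam.2 hU, subset_rfl⟩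
      · exact ⟨h1, h2.subset⟩
  rw [hsplit, Finset.sum_insert (by simp)]
  conv_rhs => rw [mobiusInv]
  rw [Finset.sum_attach _ (fun V => mobiusInv Ψ V)]
  ring

/-- Successive differences of `Φ` are sums of its Möbius inverse: each difference by `U` removes
the up-sets that contain `U`. -/
theorem IsMobiusInvL.succDiffU_eq [DecidableEq L] {Φ f : Finset L → ℝ} (hf : IsMobiusInvL Φ f)
    (l : List (Finset L)) (hl : ∀ U ∈ l, MemL U) : ∀ W, MemL W →
      succDiffU Φ l W =
        ∑ V ∈ (LFam L).filter (fun V => W ⊆ V ∧ ∀ U ∈ l, ¬ U ⊆ V), f V := by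
  induction l using List.reverseRecOn with
  | nil =>
    intro W hW
    change Φ W = _
    rw [hf W hW]
    refine Finset.sum_congr (Finset.ext fun V => ?_) fun _ _ => rfl
    simp
  | append_singleton l U ih =>
    intro W hW
    have hl' : ∀ U ∈ l, MemL U := fun V hV => hl V (by simp [hV])
    have hU : MemL U := hl U (by simp)
    have hWU : MemL (W ∪ U) := by
      refine ⟨fun x y hx hxy => ?_, hW.2.mono Finset.subset_union_left⟩
      rcases Finset.mem_union.1 hx with h | h
      · exact Finset.mem_union_left _ (hW.1 h hxy)
      · exact Finset.mem_union_right _ (hU.1 h hxy)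
    have hstep : succDiffU Φ (l ++ [U]) W = succDiffU Φ l W - succDiffU Φ l (W ∪ U) := by
      simp [succDiffU, List.foldl_append]
    rw [hstep, ih hl' W hW, ih hl' _ hWU]
    simp only [Finset.sum_filter]
    rw [← Finset.sum_sub_distrib]
    refine Finset.sum_congr rfl fun V _ => ?_
    simp only [List.mem_append, List.mem_singleton, Finset.union_subset_iff]
    by_cases h1 : W ⊆ V <;> by_cases h2 : U ⊆ V <;> by_cases h3 : ∀ U ∈ l, ¬ U ⊆ V <;>
      simp_all [or_imp, forall_and]

/-- The Möbius inverse at `U` is a successive difference at `U`: every up-set strictly larger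
than `U` contains a principal up-set `⟨z⟩*` with `z ∉ U`. -/
theorem IsMobiusInvL.apply_eq_succDiffU [DecidableEq L] {Φ f : Finset L → ℝ}
    (hf : IsMobiusInvL Φ f) {U : Finset L} (hU : MemL U) :
    f U = succDiffU Φ ((Finset.univ.filter (fun z => z ∉ U)).toList.map pUp) U := by
  rw [hf.succDiffU_eq _ (by
    intro V hV
    obtain ⟨z, -, rfl⟩ := List.mem_map.1 hV
    exact memL_pUp z) U hU]
  have : (LFam L).filter (fun V => U ⊆ V ∧
      ∀ W ∈ (Finset.univ.filter (fun z => z ∉ U)).toList.map pUp, ¬ W ⊆ V) = {U} := by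
    ext V
    simp only [Finset.mem_filter, Finset.mem_singleton, List.mem_map, Finset.mem_toList,
      Finset.mem_univ, true_and, forall_exists_index, and_imp, forall_apply_eq_imp_iff₂]
    constructor
    · rintro ⟨hV, h1, h2⟩
      refine Finset.Subset.antisymm (fun z hz => ?_) h1
      by_contra hzU
      exact h2 z hzU ((pUp_subset_iff (mem_LFam.1 hV) z).2 hz)
    · rintro rfl
      exact ⟨mem_LFam.2 hU, subset_rfl, fun z hz h => hz ((pUp_subset_iff hU z).1 h)⟩
  rw [this, Finset.sum_singleton]

theorem IsMobiusInvL.nonneg_of_minf [DecidableEq L] {Φ f : Finset L → ℝ}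
    (hf : IsMobiusInvL Φ f) (hΦ : Minf Φ) {U : Finset L} (hU : MemL U) : 0 ≤ f U := by
  rw [hf.apply_eq_succDiffU hU]
  refine hΦ _ (fun V hV => ?_) U hU
  obtain ⟨z, -, rfl⟩ := List.mem_map.1 hV
  exact memL_pUp z

theorem IsMobiusInvL.apply_pUp [DecidableEq L] {Φ f : Finset L → ℝ} (hf : IsMobiusInvL Φ f) (x : L) :
    Φ (pUp x) = ∑ V ∈ (LFam L).filter (fun V => x ∈ V), f V := by
  rw [hf _ (memL_pUp x)]
  refine Finset.sum_congr (Finset.ext fun V => ?_) fun _ _ => rfl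
  simp only [Finset.mem_filter]
  exact and_congr_right fun hV => pUp_subset_iff (mem_LFam.1 hV) x

end MobiusInverse

/-! ### Values of `λ` at the base point and at the top -/

section PathMaximum

variable {L : Type*} [Lattice L]

/-- Root the tree at `a`: each other vertex `v` is charged to the edge joining it to a neighbour
strictly closer to `a`, and `φ(v) ≤ φ(v ∨ w)` for that edge. -/
theorem phiTree_le {φ : L → ℝ} (hφ : M1 φ) (G : FinTree L) {a : L} (ha : a ∈ G.verts) :
    phiTree φ G ≤ φ a := by
  set Γ := SimpleGraph.fromEdgeSet (G.edges : Set (Sym2 L)) with hΓ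
  have hpar : ∀ v ∈ G.verts.erase a, ∃ w, s(v, w) ∈ G.edges ∧ Γ.dist w a < Γ.dist v a := by
    intro v hv
    obtain ⟨hva, hv⟩ := Finset.mem_erase.1 hv
    obtain ⟨p, hp⟩ := (G.connected v hv a ha).exists_walk_length_eq_dist
    cases p with
    | nil => exact absurd rfl hva
    | @cons _ w _ h q =>
      refine ⟨w, ?_, ?_⟩
      · simpa using ((SimpleGraph.fromEdgeSet_adj _).1 h).1
      · have := SimpleGraph.dist_le q
        rw [SimpleGraph.Walk.length_cons] at hp
        rw [hΓ]
        omega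
  choose! p hpe hpd using hpar
  set ψ : Sym2 L → ℝ := Sym2.lift ⟨fun a b => φ (a ⊔ b), fun a b => by simp [sup_comm]⟩ with hψ
  have hψ0 : ∀ e, 0 ≤ ψ e := by
    intro e
    induction e with
    | _ x y => exact hφ.1 _
  have hinj : Set.InjOn (fun v => s(v, p v)) (G.verts.erase a : Finset L) := by
    intro v hv w hw h
    rcases Sym2.eq_iff.1 h with h | h
    · exact h.1
    · have h1 := hpd v hv
      have h2 := hpd w hw
      rw [h.2] at h1
      rw [← h.1] at h2
      omega
  have hsum : ∑ v ∈ G.verts.erase a, φ v ≤ ∑ e ∈ G.edges, ψ e := by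
    calc ∑ v ∈ G.verts.erase a, φ v
        ≤ ∑ v ∈ G.verts.erase a, ψ s(v, p v) :=
          Finset.sum_le_sum fun v _ => hφ.2 le_sup_left
      _ = ∑ e ∈ (G.verts.erase a).image (fun v => s(v, p v)), ψ e :=
          (Finset.sum_image hinj).symm
      _ ≤ ∑ e ∈ G.edges, ψ e := by
          refine Finset.sum_le_sum_of_subset_of_nonneg (fun e he => ?_) fun e _ _ => hψ0 e
          obtain ⟨v, hv, rfl⟩ := Finset.mem_image.1 he
          exact hpe v hv
  have hverts := Finset.add_sum_erase G.verts φ ha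
  change (∑ a ∈ G.verts, φ a) - ∑ e ∈ G.edges, ψ e ≤ φ a
  linarith

theorem lam_eq_of_path {φ : L → ℝ} (hφ : M1 φ) {a x : L} (H : FinTree L) (hH : IsPathTree H a x)
    (hval : phiTree φ H = φ a) : lam φ a x = φ a := by
  refine IsGreatest.csSup_eq ⟨⟨H, hH, hval⟩, ?_⟩
  rintro r ⟨G, hG, rfl⟩
  exact phiTree_le hφ G hG.1

theorem lam_self {φ : L → ℝ} (hφ : M1 φ) (a : L) : lam φ a a = φ a := by
  refine lam_eq_of_path hφ
    { verts := {a}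
      edges := ∅
      nonempty := by simp
      loopless := by simp
      edge_mem := by simp
      connected := by
        intro x hx y hy
        rw [Finset.mem_singleton.1 hx, Finset.mem_singleton.1 hy]
      acyclic := by simp } ?_ ?_
  · simp [IsPathTree]
  · simp [phiTree]

theorem lam_top [BoundedOrder L] {φ : L → ℝ} (hφ : M1 φ) (a : L) : lam φ a ⊤ = φ a := by
  by_cases ha : a = ⊤
  · subst ha
    exact lam_self hφ ⊤
  have hadj : (SimpleGraph.fromEdgeSet ({s(a, ⊤)} : Set (Sym2 L))).Adj a ⊤ := by
    simp [ha]
  refine lam_eq_of_path hφ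
    { verts := {a, ⊤}
      edges := {s(a, ⊤)}
      nonempty := by simp
      loopless := by simpa using ha
      edge_mem := by simp
      connected := by
        intro x hx y hy
        rw [Finset.coe_singleton]
        simp only [Finset.mem_insert, Finset.mem_singleton] at hx hy
        rcases hx with rfl | rfl <;> rcases hy with rfl | rfl
        · exact SimpleGraph.Reachable.refl _
        · exact hadj.reachable
        · exact hadj.reachable.symm
        · exact SimpleGraph.Reachable.refl _
      acyclic := by
        rw [Finset.coe_singleton]
        intro v c hc
        -- A cycle has at least three distinct edges, and only one is available.
        have h3 := hc.three_le_length
        have hnd := hc.edges_nodup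
        rw [← SimpleGraph.Walk.length_edges] at h3
        have hsub : c.edges.toFinset ⊆ {s(a, ⊤)} := by
          intro e he
          have := c.edges_subset_edgeSet (List.mem_toFinset.1 he)
          rw [SimpleGraph.edgeSet_fromEdgeSet] at this
          simpa using this.1
        have hcard := Finset.card_le_card hsub
        rw [List.toFinset_card_of_nodup hnd, Finset.card_singleton] at hcard
        omega } ?_ ?_
  · simp [IsPathTree]
  · simp [phiTree, ha]

end PathMaximum

/-! ### Successive `λ`-differences -/

/-- Theorem on successive λ-differences: for a monotone path `(a_1,…,a_n)` (here
`a 0, …, a (n-1)`, distinct, with `a i < a j → i < j`), setting `φ_0 = φ`,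
`φ_{i+1} = Λ_{a_{i+1}} φ_i`, choosing `Ψ_i ∈ M_∞(𝓛)` with `Π(Ψ_i) = λ(φ_i; a_{i+1}, ·)`
for `i < n` and `Π(Ψ_n) = φ_n`, and letting `Φ = Σ_{i=0}^n Ψ_i` with Möbius inverse `f`
on `𝓛`, we have `Π(Φ) = φ` and, for `1 ≤ k ≤ n` and all `x`,
`Λ_{a_1,…,a_k} φ(x) = Σ{f(V) : V ∈ 𝓛, x ∈ V, a_i ∉ V for i = 1,…,k}`. -/
theorem stmt_14 {L : Type*} [Lattice L] [Fintype L] [BoundedOrder L] [DecidableEq L]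
    (φ : L → ℝ) (hφ : M1 φ) (n : ℕ) (a : ℕ → L)
    (hinj : ∀ i < n, ∀ j < n, a i = a j → i = j)
    (hmono : ∀ i < n, ∀ j < n, a i < a j → i < j)
    (φs : ℕ → L → ℝ) (hφ0 : φs 0 = φ)
    (hφs : ∀ i < n, φs (i + 1) = fun x => φs i x - lam (φs i) (a i) x)
    (Ψ : ℕ → Finset L → ℝ) (hΨcm : ∀ i ≤ n, Minf (Ψ i))
    (hΨmarg : ∀ i < n, ∀ x : L, Ψ i (pUp x) = lam (φs i) (a i) x)
    (hΨn : ∀ x : L, Ψ n (pUp x) = φs n x)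
    (Φ : Finset L → ℝ) (hΦ : Φ = fun U => ∑ i ∈ Finset.range (n + 1), Ψ i U)
    (f : Finset L → ℝ) (hf : IsMobiusInvL Φ f) :
    (∀ x : L, Φ (pUp x) = φ x) ∧
      ∀ k, 1 ≤ k → k ≤ n → ∀ x : L,
        lamSucc φ ((List.range k).map a) x =
          ∑ V ∈ (LFam L).filter (fun V => x ∈ V ∧ ∀ i < k, a i ∉ V), f V := by
  have hlam : ∀ k ≤ n, lamSucc φ ((List.range k).map a) = φs k := by
    intro k
    induction k with
    | zero => intro _; simp [lamSucc, hφ0]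
    | succ k ih =>
      intro hk
      rw [hφs k (by omega), ← ih (by omega)]
      simp [lamSucc, List.range_succ, List.foldl_append]
  set F : ℕ → Finset L → ℝ := fun i => mobiusInv (Ψ i) with hF
  have hFinv : ∀ i, IsMobiusInvL (Ψ i) (F i) := fun i => isMobiusInvL_mobiusInv (Ψ i)
  have hF0 : ∀ i ≤ n, ∀ V ∈ LFam L, 0 ≤ F i V := fun i hi V hV =>
    (hFinv i).nonneg_of_minf (hΨcm i hi) (mem_LFam.1 hV)
  have htail : ∀ m k, k + m = n → ∀ x,
      φs k x = ∑ i ∈ Finset.Ico k (n + 1), Ψ i (pUp x) := by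
    intro m
    induction m with
    | zero =>
      intro k hk x
      obtain rfl : k = n := by omega
      simp [hΨn]
    | succ m ih =>
      intro k hk x
      rw [Finset.sum_eq_sum_Ico_succ_bot (by omega), ← ih (k + 1) (by omega) x,
        hφs k (by omega), hΨmarg k (by omega) x]
      ring
  have htail' : ∀ k ≤ n, ∀ x, φs k x = ∑ i ∈ Finset.Ico k (n + 1), Ψ i (pUp x) :=
    fun k hk x => htail (n - k) k (by omega) x
  have hmem : ∀ {V : Finset L}, V ∈ LFam L → ⊤ ∈ V := by
    intro V hV
    obtain ⟨y, hy⟩ := (mem_LFam.1 hV).2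
    exact (mem_LFam.1 hV).1 hy le_top
  have hM1 : ∀ k ≤ n, M1 (φs k) := by
    intro k hk
    constructor
    · intro x
      rw [htail' k hk]
      refine Finset.sum_nonneg fun i hi => ?_
      rw [(hFinv i).apply_pUp]
      have := (Finset.mem_Ico.1 hi).2
      exact Finset.sum_nonneg fun V hV => hF0 i (by omega) V (Finset.mem_filter.1 hV).1
    · intro x y hxy
      rw [htail' k hk, htail' k hk]
      refine Finset.sum_le_sum fun i hi => ?_
      rw [(hFinv i).apply_pUp, (hFinv i).apply_pUp]
      have := (Finset.mem_Ico.1 hi).2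
      refine Finset.sum_le_sum_of_subset_of_nonneg (fun V hV => ?_) fun V hV _ =>
        hF0 i (by omega) V (Finset.mem_filter.1 hV).1
      obtain ⟨hV, hxV⟩ := Finset.mem_filter.1 hV
      exact Finset.mem_filter.2 ⟨hV, (mem_LFam.1 hV).1 hxV hxy⟩
  have hA : ∀ j i, j < i → i ≤ n → ∀ V ∈ LFam L, a j ∈ V → F i V = 0 := by
    intro j i hji hi V hV haV
    have h0 : φs (j + 1) (a j) = 0 := by
      rw [hφs j (by omega)]
      simp [lam_self (hM1 j (by omega))]
    have hnn : ∀ i ∈ Finset.Ico (j + 1) (n + 1), 0 ≤ Ψ i (pUp (a j)) := by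
      intro i hi
      have := (Finset.mem_Ico.1 hi).2
      exact hΨcm i (by omega) [] (by simp) _ (memL_pUp _)
    rw [htail' (j + 1) (by omega), Finset.sum_eq_zero_iff_of_nonneg hnn] at h0
    have h1 := h0 i (Finset.mem_Ico.2 ⟨by omega, by omega⟩)
    rw [(hFinv i).apply_pUp, Finset.sum_eq_zero_iff_of_nonneg
      (fun W hW => hF0 i hi W (Finset.mem_filter.1 hW).1)] at h1
    exact h1 V (Finset.mem_filter.2 ⟨hV, haV⟩)
  have hB : ∀ i < n, ∀ V ∈ LFam L, a i ∉ V → F i V = 0 := by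
    intro i hi V hV haV
    have h1 : Ψ i (pUp ⊤) = Ψ i (pUp (a i)) := by
      rw [hΨmarg i hi, hΨmarg i hi, lam_top (hM1 i hi.le), lam_self (hM1 i hi.le)]
    rw [(hFinv i).apply_pUp, (hFinv i).apply_pUp,
      Finset.filter_true_of_mem (fun V hV => hmem hV),
      ← Finset.sum_filter_add_sum_filter_not (LFam L) (fun V => a i ∈ V)] at h1
    have h2 : ∑ V ∈ (LFam L).filter (fun V => a i ∉ V), F i V = 0 := by linarith
    rw [Finset.sum_eq_zero_iff_of_nonneg
      (fun W hW => hF0 i hi.le W (Finset.mem_filter.1 hW).1)] at h2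
    exact h2 V (Finset.mem_filter.2 ⟨hV, haV⟩)
  have hfF : ∀ V ∈ LFam L, f V = ∑ i ∈ Finset.range (n + 1), F i V := by
    have hinv : IsMobiusInvL Φ (fun V => ∑ i ∈ Finset.range (n + 1), F i V) := by
      intro U hU
      rw [hΦ, Finset.sum_comm]
      exact Finset.sum_congr rfl fun i _ => hFinv i U hU
    intro V hV
    rw [hf.apply_eq_succDiffU (mem_LFam.1 hV), ← hinv.apply_eq_succDiffU (mem_LFam.1 hV)]
  refine ⟨fun x => ?_, fun k _ hk x => ?_⟩
  · rw [← hφ0, htail' 0 (by omega), hΦ, Finset.range_eq_Ico]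
  · rw [hlam k hk, htail' k hk]
    simp_rw [fun i => (hFinv i).apply_pUp x]
    rw [Finset.sum_comm]
    simp only [Finset.sum_filter]
    refine Finset.sum_congr rfl fun V hV => ?_
    by_cases hx : x ∈ V
    · by_cases hav : ∀ i < k, a i ∉ V
      · rw [if_pos hx, if_pos ⟨hx, hav⟩, hfF V hV,
          ← Finset.sum_range_add_sum_Ico _ (show k ≤ n + 1 by omega),
          Finset.sum_eq_zero (s := Finset.range k), zero_add]
        intro i hi
        have hi := Finset.mem_range.1 hi
        exact hB i (by omega) V hV (hav i hi)
      · rw [if_pos hx, if_neg (fun h => hav h.2)]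
        push Not at hav
        obtain ⟨j, hj, hjV⟩ := hav
        refine Finset.sum_eq_zero fun i hi => ?_
        have hi := Finset.mem_Ico.1 hi
        exact hA j i (by omega) (by omega) V hV hjV
    · rw [if_neg hx, if_neg (fun h => hx h.1)]
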